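/- arXiv:2302.13927 — 12 statements merged into one kernel-verified Lean document; each statement's English description precedes it below -/
import Mathlib

section
/- The vector π on {(0,0),(0,1),(1,0),(1,1)} given by π(0,0) = π(1,1) = (p + (1−p)a)/(4p + 2a − 4pa) and π(0,1) = π(1,0) = p(1−a)/(4p + 2a − 4pa) has nonnegative entries, sums to 1, and is an invariant (stationary) distribution of the joint source–reconstruction chain M, i.e. πM = π. (This is the paper's Lemma 2 with a = p_α·p_s.) -/
/-- Lemma 2 of the paper: the stationary distribution of the joint source–reconstruction
chain for the two-state symmetric DTMC source under the randomized stationary policy. -/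
theorem stmt_1 (p a : ℝ) (hp : 0 < p) (hp' : p < 1) (ha : 0 ≤ a) (ha' : a ≤ 1)
    (P : Fin 2 → Fin 2 → ℝ)
    (hP : ∀ x y, P x y = if x = y then 1 - p else p)
    (M : (Fin 2 × Fin 2) → (Fin 2 × Fin 2) → ℝ)
    (hM : ∀ s t, M s t =
      P s.1 t.1 * (a * (if t.2 = t.1 then 1 else 0) + (1 - a) * (if t.2 = s.2 then 1 else 0)))
    (pi : Fin 2 × Fin 2 → ℝ)
    (hpi00 : pi (0, 0) = (p + (1 - p) * a) / (4 * p + 2 * a - 4 * p * a))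
    (hpi01 : pi (0, 1) = p * (1 - a) / (4 * p + 2 * a - 4 * p * a))
    (hpi10 : pi (1, 0) = p * (1 - a) / (4 * p + 2 * a - 4 * p * a))
    (hpi11 : pi (1, 1) = (p + (1 - p) * a) / (4 * p + 2 * a - 4 * p * a)) :
    (∀ s, 0 ≤ pi s) ∧ (∑ s : Fin 2 × Fin 2, pi s = 1) ∧
      (∀ t, ∑ s : Fin 2 × Fin 2, pi s * M s t = pi t) := by
  have hA : 0 < p + (1 - p) * a := by nlinarith [mul_nonneg (sub_nonneg.2 hp'.le) ha]
  have hB : 0 ≤ p * (1 - a) := mul_nonneg hp.le (sub_nonneg.2 ha')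
  have hD : 0 < 4 * p + 2 * a - 4 * p * a := by nlinarith
  refine ⟨?_, ?_, ?_⟩
  · rintro ⟨x, y⟩
    fin_cases x <;> fin_cases y <;> simp only [Fin.zero_eta, Fin.mk_one, Fin.isValue,
      hpi00, hpi01, hpi10, hpi11]
    · exact div_nonneg hA.le hD.le
    · exact div_nonneg hB hD.le
    · exact div_nonneg hB hD.le
    · exact div_nonneg hA.le hD.le
  · simp only [Fintype.sum_prod_type, Fin.sum_univ_two, hpi00, hpi01, hpi10, hpi11]
    rw [← add_div, ← add_div, ← add_div, div_eq_one_iff_eq hD.ne']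
    ring
  · rintro ⟨x, y⟩
    generalize 4 * p + 2 * a - 4 * p * a = D at *
    fin_cases x <;> fin_cases y <;>
      simp [Fintype.sum_prod_type, Fin.sum_univ_two, hM, hP, hpi00, hpi01, hpi10, hpi11] <;>
      ring
end

section
/- Every probability vector π on {(0,0),(0,1),(1,0),(1,1)} with nonnegative entries summing to 1 that satisfies πM = π has π(0,1) + π(1,0) = 2p(1−a)/(4p + 2a − 4pa). (This is the paper's time-averaged reconstruction error P_E for the two-state DTMC source under the randomized stationary policy, eq. (38).) -/
/-- Eq. (38) of the paper: any stationary distribution of the joint source–reconstruction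
chain for the two-state symmetric DTMC source under the randomized stationary policy has
error probability π(0,1) + π(1,0) = 2p(1−a)/(4p + 2a − 4pa). -/
theorem stmt_2 (p a : ℝ) (hp : 0 < p) (hp' : p < 1) (ha : 0 < a) (ha' : a ≤ 1)
    (P : Fin 2 → Fin 2 → ℝ)
    (hP : ∀ x y, P x y = if x = y then 1 - p else p)
    (M : (Fin 2 × Fin 2) → (Fin 2 × Fin 2) → ℝ)
    (hM : ∀ s t, M s t =
      P s.1 t.1 * (a * (if t.2 = t.1 then 1 else 0) + (1 - a) * (if t.2 = s.2 then 1 else 0)))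
    (pi : Fin 2 × Fin 2 → ℝ)
    (hnn : ∀ s, 0 ≤ pi s) (hsum : ∑ s : Fin 2 × Fin 2, pi s = 1)
    (hstat : ∀ t, ∑ s : Fin 2 × Fin 2, pi s * M s t = pi t) :
    pi (0, 1) + pi (1, 0) = 2 * p * (1 - a) / (4 * p + 2 * a - 4 * p * a) := by
  have h1 := hstat (0, 1)
  have h2 := hstat (1, 0)
  simp [Fintype.sum_prod_type, Fin.sum_univ_two, hM, hP] at h1 h2 hsum
  have hd : 0 < 4 * p + 2 * a - 4 * p * a := by
    nlinarith [mul_nonneg hp.le (sub_nonneg.2 ha')]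
  rw [eq_div_iff hd.ne']
  linear_combination (-2) * h1 - 2 * h2 + 2 * p * (1 - a) * hsum
end

section
/- The vector π on {(0,0),(0,1),(1,0),(1,1)} given by π(0,0) = q[q + (1−q)a]/D, π(0,1) = π(1,0) = pq(1−a)/D and π(1,1) = p[p + (1−p)a]/D, where D = (p+q)[p(1−a) + q + (1−q)a], has nonnegative entries, sums to 1, and is an invariant (stationary) distribution of the joint source–reconstruction chain M, i.e. πM = π. (This is the paper's Lemma 3 with a = p_α·p_s.) -/
/-- Lemma 3 of the paper: the stationary distribution of the joint source–reconstruction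
chain for the two-state Birth-Death source under the randomized stationary policy. -/
theorem stmt_3 (p q a : ℝ) (hp : 0 < p) (hp' : p < 1) (hq : 0 < q) (hq' : q < 1)
    (ha : 0 ≤ a) (ha' : a ≤ 1)
    (P : Fin 2 → Fin 2 → ℝ)
    (hP00 : P 0 0 = 1 - p) (hP01 : P 0 1 = p) (hP10 : P 1 0 = q) (hP11 : P 1 1 = 1 - q)
    (M : (Fin 2 × Fin 2) → (Fin 2 × Fin 2) → ℝ)
    (hM : ∀ s t, M s t =
      P s.1 t.1 * (a * (if t.2 = t.1 then 1 else 0) + (1 - a) * (if t.2 = s.2 then 1 else 0)))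
    (D : ℝ) (hD : D = (p + q) * (p * (1 - a) + q + (1 - q) * a))
    (pi : Fin 2 × Fin 2 → ℝ)
    (hpi00 : pi (0, 0) = q * (q + (1 - q) * a) / D)
    (hpi01 : pi (0, 1) = p * q * (1 - a) / D)
    (hpi10 : pi (1, 0) = p * q * (1 - a) / D)
    (hpi11 : pi (1, 1) = p * (p + (1 - p) * a) / D) :
    (∀ s, 0 ≤ pi s) ∧ (∑ s : Fin 2 × Fin 2, pi s = 1) ∧
      (∀ t, ∑ s : Fin 2 × Fin 2, pi s * M s t = pi t) := by
  have h1 : 0 ≤ 1 - a := by linarith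
  have h2 : 0 < 1 - p := by linarith
  have h3 : 0 < 1 - q := by linarith
  have hDpos : 0 < D := by rw [hD]; positivity
  have hD0 : D ≠ 0 := hDpos.ne'
  refine ⟨?_, ?_, ?_⟩
  · rintro ⟨i, j⟩
    fin_cases i <;> fin_cases j <;> simp [hpi00, hpi01, hpi10, hpi11] <;> positivity
  · simp only [Fintype.sum_prod_type, Fin.sum_univ_two, hpi00, hpi01, hpi10, hpi11]
    field_simp
    rw [hD]; ring
  · rintro ⟨i, j⟩
    fin_cases i <;> fin_cases j <;>
      simp [Fintype.sum_prod_type, Fin.sum_univ_two, hM, hpi00, hpi01, hpi10, hpi11,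
        hP00, hP01, hP10, hP11] <;> field_simp <;> ring
end

section
/- Every probability vector π on {(0,0),(0,1),(1,0),(1,1)} with nonnegative entries summing to 1 that satisfies πM = π has π(0,1) + π(1,0) = 2pq(1−a)/( (p+q)[p(1−a) + (1−q)a + q] ). (This is the paper's time-averaged reconstruction error P_E for the two-state BDMP source under the randomized stationary policy, eq. (37).) -/
/-- Eq. (37) of the paper: any stationary distribution of the joint source–reconstruction
chain for the two-state Birth-Death source under the randomized stationary policy has
error probability π(0,1) + π(1,0) = 2pq(1−a)/((p+q)[p(1−a) + (1−q)a + q]). -/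
theorem stmt_4 (p q a : ℝ) (hp : 0 < p) (hp' : p < 1) (hq : 0 < q) (hq' : q < 1)
    (ha : 0 < a) (ha' : a ≤ 1)
    (P : Fin 2 → Fin 2 → ℝ)
    (hP00 : P 0 0 = 1 - p) (hP01 : P 0 1 = p) (hP10 : P 1 0 = q) (hP11 : P 1 1 = 1 - q)
    (M : (Fin 2 × Fin 2) → (Fin 2 × Fin 2) → ℝ)
    (hM : ∀ s t, M s t =
      P s.1 t.1 * (a * (if t.2 = t.1 then 1 else 0) + (1 - a) * (if t.2 = s.2 then 1 else 0)))
    (pi : Fin 2 × Fin 2 → ℝ)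
    (hnn : ∀ s, 0 ≤ pi s) (hsum : ∑ s : Fin 2 × Fin 2, pi s = 1)
    (hstat : ∀ t, ∑ s : Fin 2 × Fin 2, pi s * M s t = pi t) :
    pi (0, 1) + pi (1, 0) =
      2 * p * q * (1 - a) / ((p + q) * (p * (1 - a) + (1 - q) * a + q)) := by
  have h00 := hstat (0, 0)
  have h01 := hstat (0, 1)
  have h10 := hstat (1, 0)
  simp [Fintype.sum_prod_type, Fin.sum_univ_two, hM, hP00, hP01, hP10, hP11] at hsum h00 h01 h10
  generalize pi (0, 0) = x at *
  generalize pi (0, 1) = y at *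
  generalize pi (1, 0) = z at *
  generalize pi (1, 1) = w at *
  have hs : 0 < p + q := by linarith
  have hD : 0 < p * (1 - a) + (1 - q) * a + q := by
    have h1 : 0 ≤ p * (1 - a) := mul_nonneg hp.le (by linarith)
    have h2 : 0 < (1 - q) * a := mul_pos (by linarith) ha
    linarith
  have hx : (x + y) * (p + q) = q := by
    linear_combination -h00 - h01 + q * hsum
  have hw : (z + w) * (p + q) = p := by
    linear_combination (p + q) * hsum - hx
  have hpx : p * (x + y) = q * (z + w) := by
    linear_combination -h00 - h01
  have hyz : y = z := by
    have h : a * (y - z) = 0 := by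
      linear_combination -h01 + h10 - (1 - a) * hpx
    rcases mul_eq_zero.mp h with h | h <;> linarith
  subst hyz
  rw [eq_div_iff (by positivity)]
  linear_combination (-2 * (p + q)) * h01 + 2 * (1 - a) * q * hw
end

section
/- The vector π on {0,1,2}² given by π(i,i) = (p + a − pa)/(9p + 3a − 9pa) for every i, and π(i,j) = (p − pa)/(9p + 3a − 9pa) for every i ≠ j, has nonnegative entries, sums to 1, and is an invariant (stationary) distribution of the joint source–reconstruction chain M, i.e. πM = π. (This is eq. (57) of the paper with a = p_α·p_s.) -/
/-- Eq. (57) of the paper: the stationary distribution of the joint source–reconstruction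
chain for the three-state symmetric DTMC source under the randomized stationary policy. -/
theorem stmt_5 (p a : ℝ) (hp : 0 < p) (hp' : p ≤ 1 / 2) (ha : 0 ≤ a) (ha' : a ≤ 1)
    (hden : 0 < 9 * p + 3 * a - 9 * p * a)
    (P : Fin 3 → Fin 3 → ℝ)
    (hP : ∀ i j, P i j = if i = j then 1 - 2 * p else p)
    (M : (Fin 3 × Fin 3) → (Fin 3 × Fin 3) → ℝ)
    (hM : ∀ s t, M s t =
      P s.1 t.1 * (a * (if t.2 = t.1 then 1 else 0) + (1 - a) * (if t.2 = s.2 then 1 else 0)))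
    (pi : Fin 3 × Fin 3 → ℝ)
    (hpi : ∀ s : Fin 3 × Fin 3, pi s =
      if s.1 = s.2 then (p + a - p * a) / (9 * p + 3 * a - 9 * p * a)
      else (p - p * a) / (9 * p + 3 * a - 9 * p * a)) :
    (∀ s, 0 ≤ pi s) ∧ (∑ s : Fin 3 × Fin 3, pi s = 1) ∧
      (∀ t, ∑ s : Fin 3 × Fin 3, pi s * M s t = pi t) := by
  have hne : 9 * p + 3 * a - 9 * p * a ≠ 0 := hden.ne'
  have h1 : 0 ≤ p - p * a := by nlinarith
  refine ⟨?_, ?_, ?_⟩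
  · intro s
    rw [hpi]
    split_ifs
    · exact div_nonneg (by linarith) hden.le
    · exact div_nonneg h1 hden.le
  · simp only [Fintype.sum_prod_type, Fin.sum_univ_three, hpi]
    simp
    generalize hd : 9 * p + 3 * a - 9 * p * a = d at *
    field_simp
    linarith
  · rintro ⟨y, z⟩
    simp only [Fintype.sum_prod_type, Fin.sum_univ_three, hpi, hM, hP]
    generalize 9 * p + 3 * a - 9 * p * a = d at *
    fin_cases y <;> fin_cases z <;> simp <;> field_simp <;> ring
end

section
/- The function g(x) = 2p(1 − x·p_s)/(4p + 2x·p_s − 4p·x·p_s) is strictly decreasing on [0,1]; consequently g(x) ≤ g(0) = 1/2 with strict inequality for x > 0, and for every η ∈ (0,1] the minimum of g over [0,η] is attained at x = η with minimum value g(η) = 2p(1 − η·p_s)/(4p + 2η·p_s − 4p·η·p_s). (This is the paper's Lemma 4: the constrained optimum of the randomized stationary sampling probability is p*_α = η, with optimal error P*_E = g(η).) -/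
/-- Lemma 4 of the paper: the time-averaged reconstruction error of the two-state DTMC
source under the randomized stationary policy is strictly decreasing in the sampling
probability, is at most 1/2 (strictly below 1/2 for positive sampling probability), and
under the sampling-cost constraint x ≤ η its minimum over [0, η] is attained at x = η. -/
theorem stmt_8 (p ps : ℝ) (hp : 0 < p) (hp' : p < 1) (hps : 0 < ps) (hps' : ps ≤ 1)
    (g : ℝ → ℝ)
    (hg : ∀ x, g x = 2 * p * (1 - x * ps) / (4 * p + 2 * x * ps - 4 * p * x * ps)) :
    StrictAntiOn g (Set.Icc 0 1) ∧ g 0 = 1 / 2 ∧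
      (∀ x ∈ Set.Icc (0 : ℝ) 1, g x ≤ 1 / 2 ∧ (0 < x → g x < 1 / 2)) ∧
      (∀ η ∈ Set.Ioc (0 : ℝ) 1, (∀ x ∈ Set.Icc (0 : ℝ) η, g η ≤ g x) ∧
        g η = 2 * p * (1 - η * ps) / (4 * p + 2 * η * ps - 4 * p * η * ps)) := by
  have hD : ∀ x ∈ Set.Icc (0 : ℝ) 1, 0 < 4 * p + 2 * x * ps - 4 * p * x * ps := by
    rintro x ⟨h0, h1⟩
    have hu0 : 0 ≤ x * ps := mul_nonneg h0 hps.le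
    have hu1 : x * ps ≤ 1 := mul_le_one₀ h1 hps.le hps'
    have h2 : 0 ≤ p * (1 - x * ps) := mul_nonneg hp.le (by linarith)
    rcases hu0.eq_or_lt with h | h
    · have : p * (x * ps) = 0 := by rw [← h, mul_zero]
      nlinarith
    · nlinarith
  have hanti : StrictAntiOn g (Set.Icc 0 1) := by
    intro x hx y hy hxy
    rw [hg x, hg y, div_lt_div_iff₀ (hD y hy) (hD x hx)]
    have h : 0 < p * (ps * (y - x)) := mul_pos hp (mul_pos hps (by linarith))
    nlinarith
  have h0 : g 0 = 1 / 2 := by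
    rw [hg]
    field_simp
    ring
  have hz : (0 : ℝ) ∈ Set.Icc (0 : ℝ) 1 := by simp
  refine ⟨hanti, h0, fun x hx => ⟨?_, fun hx0 => ?_⟩, fun η hη => ⟨fun x hx => ?_, hg η⟩⟩
  · rw [← h0]
    exact hanti.antitoneOn hz hx hx.1
  · rw [← h0]
    exact hanti hz hx hx0
  · exact hanti.antitoneOn ⟨hx.1, hx.2.trans hη.2⟩ ⟨hη.1.le, hη.2⟩ hx.2
end

section
/- The function h(x) = 2pq(1 − x·p_s)/( (p+q)·[p + q + x·p_s·(1 − p − q)] ) is strictly decreasing on [0,1]. -/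
/-- The time-averaged reconstruction error of the two-state Birth-Death source under the
randomized stationary policy is strictly decreasing in the sampling probability on [0,1]. -/
theorem stmt_9 (p q ps : ℝ) (hp : 0 < p) (hp' : p < 1) (hq : 0 < q) (hq' : q < 1)
    (hps : 0 < ps) (hps' : ps ≤ 1)
    (h : ℝ → ℝ)
    (hh : ∀ x, h x =
      2 * p * q * (1 - x * ps) / ((p + q) * (p + q + x * ps * (1 - p - q)))) :
    StrictAntiOn h (Set.Icc 0 1) := by
  have hD : ∀ x ∈ Set.Icc (0 : ℝ) 1, 0 < p + q + x * ps * (1 - p - q) := by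
    rintro x ⟨h0, h1⟩
    have hu0 : 0 ≤ x * ps := mul_nonneg h0 hps.le
    have hu1 : x * ps ≤ 1 := mul_le_one₀ h1 hps.le hps'
    have hs : 0 < p + q := add_pos hp hq
    have e : p + q + x * ps * (1 - p - q) = (p + q) * (1 - x * ps) + x * ps := by ring
    rw [e]
    rcases hu0.eq_or_lt with hu | hu
    · rw [← hu]; linarith
    · have := mul_nonneg hs.le (sub_nonneg.2 hu1)
      linarith
  intro x hx y hy hxy
  have hs : 0 < p + q := add_pos hp hq
  rw [hh, hh, div_lt_div_iff₀ (mul_pos hs (hD y hy)) (mul_pos hs (hD x hx)), ← sub_pos]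
  have e : 2 * p * q * (1 - x * ps) * ((p + q) * (p + q + y * ps * (1 - p - q)))
      - 2 * p * q * (1 - y * ps) * ((p + q) * (p + q + x * ps * (1 - p - q)))
      = 2 * p * q * (p + q) * ps * (y - x) := by ring
  rw [e]
  have := sub_pos.2 hxy
  positivity
end

section
/- For every x ∈ [0,1], the inequality h(x) < p/(p+q) holds if and only if x·p_s·(1 + q − p) > q − p. In particular, if q ≤ p then h(x) < p/(p+q) for every x with x·p_s > 0, while if q > p then h(x) < p/(p+q) if and only if x > (q−p)/(p_s·(1+q−p)). (This is the paper's comparison of the randomized stationary policy against never sampling when the receiver starts in state 0, eqs. (39)–(41).) -/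
/-- Eqs. (39)–(41) of the paper: comparison of the randomized stationary policy with the
no-sampling policy for the two-state Birth-Death source when the receiver starts in
state 0. -/
theorem stmt_10 (p q ps : ℝ) (hp : 0 < p) (hp' : p < 1) (hq : 0 < q) (hq' : q < 1)
    (hps : 0 < ps) (hps' : ps ≤ 1)
    (h : ℝ → ℝ)
    (hh : ∀ x, h x =
      2 * p * q * (1 - x * ps) / ((p + q) * (p * (1 - x * ps) + (1 - q) * x * ps + q))) :
    ∀ x ∈ Set.Icc (0 : ℝ) 1,
      (h x < p / (p + q) ↔ q - p < x * ps * (1 + q - p)) ∧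
      (q ≤ p → 0 < x * ps → h x < p / (p + q)) ∧
      (p < q → (h x < p / (p + q) ↔ (q - p) / (ps * (1 + q - p)) < x)) := by
  rintro x ⟨hx0, hx1⟩
  have hy0 : 0 ≤ x * ps := mul_nonneg hx0 hps.le
  have hy1 : x * ps ≤ 1 := mul_le_one₀ hx1 hps.le hps'
  have hpq : 0 < p + q := by linarith
  have hD : 0 < p * (1 - x * ps) + (1 - q) * x * ps + q := by
    have h1 : 0 ≤ p * (1 - x * ps) := mul_nonneg hp.le (by linarith)
    have h2 : 0 ≤ (1 - q) * (x * ps) := mul_nonneg (by linarith) hy0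
    linarith [mul_assoc (1 - q) x ps]
  have hc : 0 < 1 + q - p := by linarith
  have key : h x < p / (p + q) ↔ q - p < x * ps * (1 + q - p) := by
    have e : p / (p + q) - h x =
        p * (x * ps * (1 + q - p) - (q - p)) /
          ((p + q) * (p * (1 - x * ps) + (1 - q) * x * ps + q)) := by
      rw [hh, eq_div_iff (mul_pos hpq hD).ne', sub_mul,
        div_mul_cancel₀ _ (mul_pos hpq hD).ne', ← mul_assoc, div_mul_cancel₀ _ hpq.ne']
      ring
    rw [← sub_pos, e, div_pos_iff_of_pos_right (mul_pos hpq hD),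
      mul_pos_iff_of_pos_left hp, sub_pos]
  refine ⟨key, fun hle hpos => key.2 ?_, fun _ => ?_⟩
  · linarith [mul_pos hpos hc]
  · rw [key, div_lt_iff₀ (mul_pos hps hc), mul_assoc]
end

section
/- For every x ∈ [0,1], the inequality f(x) ≤ 2(1 − p_s)/(3 − p_s) holds if and only if x ≥ 2p/(1 − p_s(1 − 2p)), i.e. the randomized stationary policy with sampling probability p_α has time-averaged reconstruction error at most that of the change-aware policy if and only if p_α ≥ 2p/(1 − p_s(1−2p)). (This is the second claim of the paper's Remark 1; note 1 − p_s(1−2p) = 1 − p_s + 2p·p_s > 0.) -/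
/-- Second claim of Remark 1 of the paper: for the three-state symmetric DTMC source, the
randomized stationary policy with sampling probability x has time-averaged reconstruction
error at most that of the change-aware policy iff x ≥ 2p/(1 − p_s(1 − 2p)). -/
theorem stmt_12 (p ps : ℝ) (hp : 0 < p) (hp' : p ≤ 1 / 2) (hps : 0 < ps) (hps' : ps ≤ 1)
    (f : ℝ → ℝ)
    (hf : ∀ x, f x = 2 * p * (1 - x * ps) / (3 * p + x * ps * (1 - 3 * p))) :
    ∀ x ∈ Set.Icc (0 : ℝ) 1,
      (f x ≤ 2 * (1 - ps) / (3 - ps) ↔ 2 * p / (1 - ps * (1 - 2 * p)) ≤ x) := by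
  rintro x ⟨hx0, hx1⟩
  have hy0 : 0 ≤ x * ps := mul_nonneg hx0 hps.le
  have hy1 : x * ps ≤ 1 := mul_le_one₀ hx1 hps.le hps'
  have hA : 0 < 3 * p + x * ps * (1 - 3 * p) := by
    rcases hy0.eq_or_lt with h | h
    · rw [← h]; linarith
    · nlinarith [mul_nonneg hp.le (sub_nonneg.2 hy1)]
  have hB : 0 < 3 - ps := by linarith
  have hD : 0 < 1 - ps * (1 - 2 * p) := by nlinarith [mul_pos hp hps]
  rw [hf, div_le_div_iff₀ hA hB, div_le_iff₀ hD]
  have key : 2 * (1 - ps) * (3 * p + x * ps * (1 - 3 * p)) - 2 * p * (1 - x * ps) * (3 - ps)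
      = 2 * ps * (x * (1 - ps * (1 - 2 * p)) - 2 * p) := by ring
  rw [← sub_nonneg, key, mul_nonneg_iff_of_pos_left (by linarith), sub_nonneg]
end

section
/- Let θ₁ = (p·p_s − 3p²(1 − p_s)) / ( (2p + 3p² − 1)p_s² − (p + 3p²)p_s ), and assume 0 < θ₁ ≤ 1. Then for every p_α with 0 < p_α ≤ θ₁, V(p_α) ≤ V(1), i.e. the randomized stationary policy has reconstruction-error variance no larger than the semantics-aware policy. (This is the variance comparison against the semantics-aware policy in the paper's Remark 1.) -/
/-- Variance comparison against the semantics-aware policy in Remark 1 of the paper: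
for 0 < p_α ≤ θ₁ the randomized stationary policy has reconstruction-error variance no
larger than the semantics-aware policy. -/
theorem stmt_13 (p ps : ℝ) (hp : 0 < p) (hp' : p ≤ 1 / 2) (hps : 0 < ps) (hps' : ps ≤ 1)
    (f V : ℝ → ℝ)
    (hf : ∀ x, f x = 2 * p * (1 - x * ps) / (3 * p + x * ps * (1 - 3 * p)))
    (hV : ∀ x, V x = f x * (1 - f x))
    (θ : ℝ)
    (hθ : θ = (p * ps - 3 * p ^ 2 * (1 - ps)) /
      ((2 * p + 3 * p ^ 2 - 1) * ps ^ 2 - (p + 3 * p ^ 2) * ps))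
    (hθpos : 0 < θ) (hθle : θ ≤ 1) :
    ∀ pa : ℝ, 0 < pa → pa ≤ θ → V pa ≤ V 1 := by
  intro pa hpa hle
  have hu : 0 ≤ 1 - ps := by linarith
  have ha1 : pa ≤ 1 := hle.trans hθle
  have has : pa * ps ≤ ps := by nlinarith
  have ha0 : 0 < pa * ps := mul_pos hpa hps
  have hden : (2 * p + 3 * p ^ 2 - 1) * ps ^ 2 - (p + 3 * p ^ 2) * ps < 0 := by
    have h1 : 0 ≤ (p + 3 * p ^ 2) * (1 - ps) := by positivity
    have h2 : 0 < ps * (1 - p) := mul_pos hps (by linarith)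
    have h3 : 0 < ps * ((p + 3 * p ^ 2) * (1 - ps) + ps * (1 - p)) :=
      mul_pos hps (by linarith)
    linarith [h3]
  have hkey : p * ps - 3 * p ^ 2 * (1 - ps) ≤
      pa * ((2 * p + 3 * p ^ 2 - 1) * ps ^ 2 - (p + 3 * p ^ 2) * ps) := by
    rw [hθ] at hle
    exact (le_div_iff_of_neg hden).1 hle
  have hDa : 0 < 3 * p + pa * ps * (1 - 3 * p) := by
    have : 0 ≤ p * (1 - pa * ps) := mul_nonneg hp.le (by linarith)
    linarith
  have hDs : 0 < 3 * p + 1 * ps * (1 - 3 * p) := by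
    have : 0 ≤ p * (1 - ps) := mul_nonneg hp.le hu
    linarith
  have hmono : f 1 ≤ f pa := by
    rw [hf, hf, div_le_div_iff₀ hDs hDa]
    have : 0 ≤ p * (ps - pa * ps) := mul_nonneg hp.le (by linarith)
    linarith
  have hsum : 1 ≤ f pa + f 1 := by
    rw [hf, hf, div_add_div _ _ hDa.ne' hDs.ne', le_div_iff₀ (mul_pos hDa hDs)]
    linarith
  rw [hV, hV]
  nlinarith [mul_nonneg (sub_nonneg.2 hmono) (sub_nonneg.2 hsum)]
end

section
/- Fix 0 < P_AS < P_NS < 1 and an integer n ≥ 1. The distribution π on ℕ defined by π(0) = [1 + (P_NS − P_NS^n)/(1 − P_NS) + P_NS^n/(1 − P_AS)]^{-1}, π(k) = P_NS^k·π(0) for 1 ≤ k ≤ n−1, and π(k) = P_AS^{k−n}·P_NS^n·π(0) for k ≥ n, has nonnegative entries summing to 1 and is invariant under the Markov kernel K_n on ℕ given by: from state k, move to k+1 with probability P_NS if k ≤ n−1 and with probability P_AS if k ≥ n, and otherwise move to 0. (These are eqs. (76)–(77) of the paper: the steady-state distribution of the consecutive-error chain under the wait-then-generate policy.) -/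
/-- Eqs. (76)–(77) of the paper: the steady-state distribution of the consecutive-error
chain under the wait-then-generate policy with threshold n. -/
theorem stmt_17 (PAS PNS : ℝ) (h1 : 0 < PAS) (h2 : PAS < PNS) (h3 : PNS < 1)
    (n : ℕ) (hn : 1 ≤ n)
    (c : ℝ)
    (hc : c = (1 + (PNS - PNS ^ n) / (1 - PNS) + PNS ^ n / (1 - PAS))⁻¹)
    (pi : ℕ → ℝ)
    (hpi0 : pi 0 = c)
    (hpi1 : ∀ k, 1 ≤ k → k ≤ n - 1 → pi k = PNS ^ k * c)
    (hpi2 : ∀ k, n ≤ k → pi k = PAS ^ (k - n) * PNS ^ n * c)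
    (K : ℕ → ℕ → ℝ)
    (hK : ∀ k m, K k m =
      if k ≤ n - 1 then
        (if m = k + 1 then PNS else if m = 0 then 1 - PNS else 0)
      else
        (if m = k + 1 then PAS else if m = 0 then 1 - PAS else 0)) :
    (∀ k, 0 ≤ pi k) ∧ (∑' k : ℕ, pi k = 1) ∧
      (∀ m, ∑' k : ℕ, pi k * K k m = pi m) := by
  have hN0 : 0 < PNS := h1.trans h2
  have hA1 : PAS < 1 := h2.trans h3
  have hN' : 0 < 1 - PNS := by linarith
  have hA' : 0 < 1 - PAS := by linarith
  have hpow : 0 < PNS ^ n := pow_pos hN0 n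
  have hle : PNS ^ n ≤ PNS := pow_le_of_le_one hN0.le h3.le (by omega)
  have hD : 0 < 1 + (PNS - PNS ^ n) / (1 - PNS) + PNS ^ n / (1 - PAS) := by
    have : 0 ≤ (PNS - PNS ^ n) / (1 - PNS) := div_nonneg (by linarith) hN'.le
    positivity
  have hc0 : 0 < c := by rw [hc]; positivity
  have hlow : ∀ k, k < n → pi k = PNS ^ k * c := by
    intro k hk
    rcases Nat.eq_zero_or_pos k with rfl | h
    · simp [hpi0]
    · exact hpi1 k h (by omega)
  have hnn : ∀ k, 0 ≤ pi k := by
    intro k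
    rcases lt_or_ge k n with h | h
    · rw [hlow k h]; positivity
    · rw [hpi2 k h]; positivity
  have hsum : HasSum pi 1 := by
    rw [← hasSum_nat_add_iff' n]
    have e1 : ∑ i ∈ Finset.range n, pi i = (1 - PNS ^ n) / (1 - PNS) * c := by
      rw [Finset.sum_congr rfl (fun i hi => hlow i (Finset.mem_range.mp hi)),
        ← Finset.sum_mul, geom_sum_eq h3.ne, ← neg_div_neg_eq, neg_sub, neg_sub]
    have e2 : (fun k => pi (k + n)) = fun k => PAS ^ k * (PNS ^ n * c) := by
      funext k
      rw [hpi2 (k + n) (by omega), Nat.add_sub_cancel, mul_assoc]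
    have e3 : 1 - ∑ i ∈ Finset.range n, pi i = (1 - PAS)⁻¹ * (PNS ^ n * c) := by
      have h4 : (1 + (PNS - PNS ^ n) / (1 - PNS) + PNS ^ n / (1 - PAS)) * c = 1 := by
        rw [hc]; exact mul_inv_cancel₀ hD.ne'
      have h5 : (1 - PNS ^ n) / (1 - PNS) = 1 + (PNS - PNS ^ n) / (1 - PNS) := by
        field_simp; ring
      rw [e1, h5]; linear_combination -h4
    rw [e2, e3]
    exact (hasSum_geometric_of_lt_one h1.le hA1).mul_right _
  have hstep : ∀ k, pi k * K k (k + 1) = pi (k + 1) := by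
    intro k
    rw [hK]
    by_cases h : k ≤ n - 1
    · rw [if_pos h, if_pos rfl, hlow k (by omega)]
      rcases lt_or_ge (k + 1) n with h' | h'
      · rw [hlow _ h']; ring
      · have : n = k + 1 := by omega
        rw [hpi2 _ h', this]; simp; ring
    · rw [if_neg h, if_pos rfl, hpi2 k (by omega), hpi2 (k + 1) (by omega),
        show k + 1 - n = (k - n) + 1 by omega]
      ring
  refine ⟨hnn, hsum.tsum_eq, ?_⟩
  intro m
  rcases m with _ | m
  · have e : ∀ k, pi k * K k 0 = pi k - pi (k + 1) := by
      intro k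
      rw [← hstep k, hK, hK]
      split_ifs <;> first | contradiction | omega | ring
    have h6 : HasSum (fun k => pi (k + 1)) (1 - pi 0) := by
      have := (hasSum_nat_add_iff' 1).mpr hsum
      simpa using this
    simp_rw [e]
    rw [(hsum.sub h6).tsum_eq]; ring
  · rw [tsum_eq_single m, hstep]
    intro k hk
    rw [hK]
    have : ¬ (m + 1 = k + 1) := by omega
    simp [this, Ne.symm hk]
end

section
/- Fix 0 < P_AS < P_NS < 1 and η ∈ (0,1). For n ∈ ℕ define T(n) = [P_NS^n/(1 − P_AS)] · [1 + (P_NS − P_NS^n)/(1 − P_NS) + P_NS^n/(1 − P_AS)]^{-1}. Then T(n) ≤ η if and only if n ≥ L, where L = ln( η(1 − P_AS) / (1 − (1−η)P_NS − η·P_AS) ) / ln(P_NS); consequently the least natural number n with T(n) ≤ η is n* = ⌈L⌉. (This is the paper's Lemma 5: the optimal threshold of the wait-then-generate policy is n* = ⌈log_{P_NS}( η(1−P_AS)/(1−(1−η)P_NS−η·P_AS) )⌉; note 1 − (1−η)P_NS − η·P_AS > 0 and the argument of the logarithm lies in (0,1], so L ≥ 0.) -/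
/-- Lemma 5 of the paper: the sampling-cost constraint T(n) ≤ η holds iff n ≥ L, and the
optimal threshold of the wait-then-generate policy is n* = ⌈L⌉, where
L = log_{P_NS}( η(1−P_AS)/(1−(1−η)P_NS−η·P_AS) ). -/
theorem stmt_18 (PAS PNS η : ℝ) (h1 : 0 < PAS) (h2 : PAS < PNS) (h3 : PNS < 1)
    (hη : 0 < η) (hη' : η < 1)
    (T : ℕ → ℝ)
    (hT : ∀ n, T n = (PNS ^ n / (1 - PAS)) *
      (1 + (PNS - PNS ^ n) / (1 - PNS) + PNS ^ n / (1 - PAS))⁻¹)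
    (L : ℝ)
    (hL : L = Real.log (η * (1 - PAS) / (1 - (1 - η) * PNS - η * PAS)) / Real.log PNS) :
    (∀ n : ℕ, T n ≤ η ↔ L ≤ (n : ℝ)) ∧ IsLeast {n : ℕ | T n ≤ η} ⌈L⌉₊ := by
  have ha : 0 < 1 - PAS := by linarith
  have hb : 0 < 1 - PNS := by linarith
  have hp : 0 < PNS := by linarith
  have hD : 0 < 1 - (1 - η) * PNS - η * PAS := by nlinarith
  have hlog : Real.log PNS < 0 := Real.log_neg hp h3
  have key : ∀ n : ℕ, T n ≤ η ↔ L ≤ (n : ℝ) := by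
    intro n
    have hx : 0 < PNS ^ n := pow_pos hp n
    have hx1 : PNS ^ n ≤ 1 := pow_le_one₀ hp.le h3.le
    have hR : L ≤ (n : ℝ) ↔ PNS ^ n * (1 - (1 - η) * PNS - η * PAS) ≤ η * (1 - PAS) := by
      rw [hL, div_le_iff_of_neg hlog, ← Real.log_pow,
        Real.log_le_log_iff hx (by positivity), le_div_iff₀ hD]
    have hd : 0 < (1 - PNS ^ n) * (1 - PAS) + PNS ^ n * (1 - PNS) := by
      have : 0 ≤ (1 - PNS ^ n) * (1 - PAS) := mul_nonneg (by linarith) ha.le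
      have := mul_pos hx hb
      linarith
    have hTn : T n = PNS ^ n * (1 - PNS) /
        ((1 - PNS ^ n) * (1 - PAS) + PNS ^ n * (1 - PNS)) := by
      have e : 1 + (PNS - PNS ^ n) / (1 - PNS) + PNS ^ n / (1 - PAS) =
          ((1 - PNS ^ n) * (1 - PAS) + PNS ^ n * (1 - PNS)) / ((1 - PNS) * (1 - PAS)) := by
        generalize PNS ^ n = x
        field_simp
        ring
      rw [hT, e, inv_div, div_mul_div_comm, div_eq_div_iff (by positivity) hd.ne']
      ring
    rw [hR, hTn, div_le_iff₀ hd]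
    constructor <;> intro h <;> linarith
  refine ⟨key, ?_, ?_⟩
  · exact (key _).2 (Nat.le_ceil L)
  · intro n hn
    exact Nat.ceil_le.2 ((key n).1 hn)
end
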